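/- arXiv:2508.06241 — 6 statements merged into one kernel-verified Lean document; each statement's English description precedes it below -/
import Mathlib

section
/- Let E_i and E_e be symmetric real 3×3 matrices satisfying the transmission conditions: E_e − E_i = (δ⊗n + n⊗δ)/2 for some vector δ ∈ ℝ³, and ℂᵉ E_e n = ℂⁱ E_i n. Then (ℂᵉ − ℂⁱ) E_i = 𝕄 E_e. -/
open Matrix

/-- Symmetric part of a matrix. -/
noncomputable def symPart (A : Matrix (Fin 3) (Fin 3) ℝ) : Matrix (Fin 3) (Fin 3) ℝ :=
  (1 / 2 : ℝ) • (A + Aᵀ)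

/-- Isotropic elasticity tensor with Lamé parameters `lam`, `mu`:
`ℂ A = 2μ Â + λ (tr A) I₃`. -/
noncomputable def elastC (lam mu : ℝ) (A : Matrix (Fin 3) (Fin 3) ℝ) :
    Matrix (Fin 3) (Fin 3) ℝ :=
  (2 * mu) • symPart A + (lam * A.trace) • (1 : Matrix (Fin 3) (Fin 3) ℝ)

/-- The difference tensor `ℂᵉ − ℂⁱ` applied to `A`. -/
noncomputable def Cdiff (lami mui lame mue : ℝ) (A : Matrix (Fin 3) (Fin 3) ℝ) :
    Matrix (Fin 3) (Fin 3) ℝ :=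
  elastC lame mue A - elastC lami mui A

/-- `Q` is the inverse of the positive definite matrix `μⁱI₃ + (λⁱ+μⁱ) n⊗n`. -/
noncomputable def Qmat (lami mui : ℝ) (n : Fin 3 → ℝ) : Matrix (Fin 3) (Fin 3) ℝ :=
  (mui • (1 : Matrix (Fin 3) (Fin 3) ℝ) + (lami + mui) • vecMulVec n n)⁻¹

/-- The elastic moment tensor
`𝕄A = (ℂᵉ−ℂⁱ)A + (ℂᵉ−ℂⁱ)[(Q((ℂᵉ−ℂⁱ)A n))⊗n]`. -/
noncomputable def emt (lami mui lame mue : ℝ) (n : Fin 3 → ℝ)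
    (A : Matrix (Fin 3) (Fin 3) ℝ) : Matrix (Fin 3) (Fin 3) ℝ :=
  Cdiff lami mui lame mue A +
    Cdiff lami mui lame mue
      (vecMulVec ((Qmat lami mui n).mulVec ((Cdiff lami mui lame mue A).mulVec n)) n)

/-!
Since `ℂ` only sees the symmetric part of its argument, the jump `E_e - E_i` may be replaced by
`δ ⊗ n`, and `ℂⁱ(δ ⊗ n) n = Q⁻¹ δ` for the unit vector `n`. Continuity of the traction therefore
reads `(ℂᵉ - ℂⁱ) E_e n = -ℂⁱ(E_e - E_i) n = -Q⁻¹ δ`. Hence `Q` recovers `-δ` from `E_e` alone, and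
`𝕄 E_e = (ℂᵉ - ℂⁱ)(E_e - δ ⊗ n) = (ℂᵉ - ℂⁱ) E_i`.
-/

theorem isUnit_det_smul_one_add_vecMulVec {ι K : Type*} [Fintype ι] [DecidableEq ι] [Field K]
    {a : K} {u v : ι → K} (ha : a ≠ 0) (hauv : a + v ⬝ᵥ u ≠ 0) :
    IsUnit (a • (1 : Matrix ι ι K) + vecMulVec u v).det := by
  have hfactor : a • (1 : Matrix ι ι K) + vecMulVec u v = a • (1 + vecMulVec (a⁻¹ • u) v) := by
    rw [smul_add, smul_vecMulVec, smul_inv_smul₀ ha]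
  have hdet : (1 + vecMulVec (a⁻¹ • u) v).det = a⁻¹ * (a + v ⬝ᵥ u) := by
    rw [vecMulVec_eq Unit, det_one_add_replicateCol_mul_replicateRow, dotProduct_smul, smul_eq_mul,
      mul_add, inv_mul_cancel₀ ha]
  rw [hfactor, det_smul, hdet]
  exact (mul_ne_zero (pow_ne_zero _ ha) (mul_ne_zero (inv_ne_zero ha) hauv)).isUnit

theorem symPart_sub (A B : Matrix (Fin 3) (Fin 3) ℝ) :
    symPart (A - B) = symPart A - symPart B := by
  simp only [symPart, transpose_sub]
  module

theorem symPart_neg (A : Matrix (Fin 3) (Fin 3) ℝ) : symPart (-A) = -symPart A := by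
  simp only [symPart, transpose_neg]
  module

theorem symPart_symPart (A : Matrix (Fin 3) (Fin 3) ℝ) : symPart (symPart A) = symPart A := by
  simp only [symPart, transpose_smul, transpose_add, transpose_transpose]
  module

theorem trace_symPart (A : Matrix (Fin 3) (Fin 3) ℝ) : (symPart A).trace = A.trace := by
  rw [symPart, trace_smul, trace_add, trace_transpose, smul_eq_mul]
  ring

theorem symPart_vecMulVec (u v : Fin 3 → ℝ) :
    symPart (vecMulVec u v) = (1 / 2 : ℝ) • (vecMulVec u v + vecMulVec v u) := by
  rw [symPart, transpose_vecMulVec]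

section Lame

variable (lam mu : ℝ)

theorem elastC_sub (A B : Matrix (Fin 3) (Fin 3) ℝ) :
    elastC lam mu (A - B) = elastC lam mu A - elastC lam mu B := by
  simp only [elastC, symPart_sub, trace_sub]
  module

theorem elastC_symPart (A : Matrix (Fin 3) (Fin 3) ℝ) :
    elastC lam mu (symPart A) = elastC lam mu A := by
  rw [elastC, symPart_symPart, trace_symPart, elastC]

theorem elastC_vecMulVec_mulVec (u v w : Fin 3 → ℝ) :
    elastC lam mu (vecMulVec u v) *ᵥ w =
      mu • ((v ⬝ᵥ w) • u + (u ⬝ᵥ w) • v) + (lam * (u ⬝ᵥ v)) • w := by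
  simp only [elastC, symPart_vecMulVec, add_mulVec, smul_mulVec, vecMulVec_mulVec, one_mulVec,
    trace_vecMulVec, op_smul_eq_smul]
  module

/-- The acoustic (Christoffel) tensor `μ I₃ + (λ + μ) n ⊗ n` of the isotropic medium in the unit
direction `n`; `Qmat` is its inverse. -/
noncomputable def acousticTensor (n : Fin 3 → ℝ) : Matrix (Fin 3) (Fin 3) ℝ :=
  mu • (1 : Matrix (Fin 3) (Fin 3) ℝ) + (lam + mu) • vecMulVec n n

variable {lam mu} {n : Fin 3 → ℝ}

theorem elastC_vecMulVec_mulVec_self (hn : n ⬝ᵥ n = 1) (u : Fin 3 → ℝ) :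
    elastC lam mu (vecMulVec u n) *ᵥ n = acousticTensor lam mu n *ᵥ u := by
  simp only [elastC_vecMulVec_mulVec, acousticTensor, add_mulVec, smul_mulVec, one_mulVec,
    vecMulVec_mulVec, op_smul_eq_smul, hn, dotProduct_comm n u]
  module

theorem isUnit_det_acousticTensor (hn : n ⬝ᵥ n = 1) (hmu : mu ≠ 0) (hlam : lam + 2 * mu ≠ 0) :
    IsUnit (acousticTensor lam mu n).det := by
  rw [acousticTensor, ← smul_vecMulVec]
  refine isUnit_det_smul_one_add_vecMulVec hmu ?_
  rw [dotProduct_smul, hn, smul_eq_mul]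
  convert hlam using 1
  ring

theorem Qmat_mulVec_acousticTensor_mulVec (hn : n ⬝ᵥ n = 1) (hmu : mu ≠ 0)
    (hlam : lam + 2 * mu ≠ 0) (u : Fin 3 → ℝ) :
    Qmat lam mu n *ᵥ (acousticTensor lam mu n *ᵥ u) = u := by
  rw [Qmat, ← acousticTensor, mulVec_mulVec,
    nonsing_inv_mul _ (isUnit_det_acousticTensor hn hmu hlam), one_mulVec]

end Lame

section Transmission

variable {lami mui lame mue : ℝ}

theorem Cdiff_sub (A B : Matrix (Fin 3) (Fin 3) ℝ) :
    Cdiff lami mui lame mue (A - B) = Cdiff lami mui lame mue A - Cdiff lami mui lame mue B := by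
  simp only [Cdiff, elastC_sub]
  abel

theorem Cdiff_symPart (A : Matrix (Fin 3) (Fin 3) ℝ) :
    Cdiff lami mui lame mue (symPart A) = Cdiff lami mui lame mue A := by
  simp only [Cdiff, elastC_symPart]

variable {n δ : Fin 3 → ℝ} {Ei Ee : Matrix (Fin 3) (Fin 3) ℝ}

theorem Cdiff_mulVec_eq_acousticTensor_mulVec_neg (hn : n ⬝ᵥ n = 1)
    (hjump : Ee - Ei = symPart (vecMulVec δ n))
    (htrans : elastC lame mue Ee *ᵥ n = elastC lami mui Ei *ᵥ n) :
    Cdiff lami mui lame mue Ee *ᵥ n = acousticTensor lami mui n *ᵥ (-δ) :=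
  calc Cdiff lami mui lame mue Ee *ᵥ n
      = -(elastC lami mui (Ee - Ei) *ᵥ n) := by
        rw [Cdiff, sub_mulVec, htrans, elastC_sub, sub_mulVec, neg_sub]
    _ = -(elastC lami mui (vecMulVec δ n) *ᵥ n) := by rw [hjump, elastC_symPart]
    _ = acousticTensor lami mui n *ᵥ (-δ) := by
        rw [elastC_vecMulVec_mulVec_self hn, mulVec_neg]

end Transmission

theorem transmission_gives_moment_tensor_general {lami mui lame mue : ℝ}
    (hmui : mui ≠ 0) (hlami : lami + 2 * mui ≠ 0)
    {n : Fin 3 → ℝ} (hn : n ⬝ᵥ n = 1)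
    {Ei Ee : Matrix (Fin 3) (Fin 3) ℝ} {δ : Fin 3 → ℝ}
    (hjump : Ee - Ei = (1 / 2 : ℝ) • (vecMulVec δ n + vecMulVec n δ))
    (htrans : elastC lame mue Ee *ᵥ n = elastC lami mui Ei *ᵥ n) :
    Cdiff lami mui lame mue Ei = emt lami mui lame mue n Ee := by
  rw [← symPart_vecMulVec] at hjump
  have hQ : Qmat lami mui n *ᵥ (Cdiff lami mui lame mue Ee *ᵥ n) = -δ := by
    rw [Cdiff_mulVec_eq_acousticTensor_mulVec_neg hn hjump htrans,
      Qmat_mulVec_acousticTensor_mulVec hn hmui hlami]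
  have hneg : symPart (vecMulVec (-δ) n) = Ei - Ee := by
    rw [neg_vecMulVec, symPart_neg, ← hjump, neg_sub]
  symm
  calc emt lami mui lame mue n Ee
      = Cdiff lami mui lame mue Ee + Cdiff lami mui lame mue (vecMulVec (-δ) n) := by rw [emt, hQ]
    _ = Cdiff lami mui lame mue Ee + Cdiff lami mui lame mue (Ei - Ee) := by
        rw [← hneg, Cdiff_symPart]
    _ = Cdiff lami mui lame mue Ei := by rw [Cdiff_sub, add_sub_cancel]

/-- Transmission conditions across a flat interface imply `(ℂᵉ − ℂⁱ) E_i = 𝕄 E_e`. -/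
theorem transmission_gives_moment_tensor (lami mui lame mue : ℝ)
    (hmui : mui > 0) (hsum : lami + mui > 0)
    (n : Fin 3 → ℝ) (hn : n ⬝ᵥ n = 1)
    (Ei Ee : Matrix (Fin 3) (Fin 3) ℝ) (hEi : Ei.IsSymm) (hEe : Ee.IsSymm)
    (δ : Fin 3 → ℝ)
    (hjump : Ee - Ei = (1 / 2 : ℝ) • (vecMulVec δ n + vecMulVec n δ))
    (htrans : (elastC lame mue Ee).mulVec n = (elastC lami mui Ei).mulVec n) :
    Cdiff lami mui lame mue Ei = emt lami mui lame mue n Ee := by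
  exact transmission_gives_moment_tensor_general hmui.ne' (by linarith) hn hjump htrans
end

section
/- The elastic moment tensor 𝕄 has the major symmetry: for all symmetric real 3×3 matrices A and B, 𝕄A · B = A · 𝕄B. -/
open Matrix

/-- Frobenius inner product of real 3×3 matrices. -/
def frob (A B : Matrix (Fin 3) (Fin 3) ℝ) : ℝ := ∑ i, ∑ j, A i j * B i j

/-!
Write `C = ℂᵉ − ℂⁱ` and `T A = (Q (A n)) ⊗ n`, so that `𝕄 = C + C ∘ T ∘ C`. For the Frobenius inner
product, `C` is self-adjoint, being a combination of the identity, the transpose and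
`A ↦ (tr A) I₃`; and `T` is self-adjoint because `T A · B = Q (A n) · (B n)` and `Q`, the inverse of
a symmetric matrix, is symmetric. Hence `𝕄` is self-adjoint.
-/

section Frobenius

variable {R m p : Type*} [CommSemiring R] [Fintype m] [Fintype p]

/-- The Frobenius inner product `A · B = ∑ i, ∑ j, A i j * B i j` of rectangular matrices over a
commutative semiring, bundled as a bilinear form so that Mathlib's calculus of adjoint maps
applies; on real `3 × 3` matrices it agrees definitionally with `frob`. -/
def frobForm : LinearMap.BilinForm R (Matrix m p R) :=
  LinearMap.mk₂ R (fun A B ↦ ∑ i, ∑ j, A i j * B i j)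
    (by simp [add_mul, Finset.sum_add_distrib])
    (by simp [Finset.mul_sum, mul_assoc])
    (by simp [mul_add, Finset.sum_add_distrib])
    (by simp [Finset.mul_sum, mul_left_comm])

theorem frobForm_apply (A B : Matrix m p R) : frobForm A B = ∑ i, ∑ j, A i j * B i j :=
  rfl

theorem frobForm_comm (A B : Matrix m p R) : frobForm A B = frobForm B A := by
  simp only [frobForm_apply, mul_comm]

theorem frobForm_vecMulVec_left (u : m → R) (v : p → R) (A : Matrix m p R) :
    frobForm (vecMulVec u v) A = u ⬝ᵥ A *ᵥ v := by
  simp only [frobForm_apply, vecMulVec_apply, dotProduct, mulVec, Finset.mul_sum]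
  simp only [mul_assoc, mul_comm (v _)]

theorem frobForm_isSelfAdjoint_transpose :
    (frobForm (R := R) (m := m) (p := m)).IsSelfAdjoint transpose :=
  fun _ _ ↦ Finset.sum_comm

theorem frobForm_one_left [DecidableEq m] (A : Matrix m m R) : frobForm 1 A = A.trace := by
  simp [frobForm_apply, one_apply, trace]

theorem frobForm_isSelfAdjoint_trace_smul_one [DecidableEq m] :
    (frobForm (R := R)).IsSelfAdjoint fun A : Matrix m m R ↦ A.trace • (1 : Matrix m m R) := by
  intro A B
  calc frobForm (A.trace • 1) B
      = A.trace * B.trace := by rw [LinearMap.map_smul₂, frobForm_one_left, smul_eq_mul]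
    _ = frobForm A (B.trace • 1) := by
      rw [map_smul, frobForm_comm, frobForm_one_left, smul_eq_mul, mul_comm]

theorem frobForm_isSelfAdjoint_vecMulVec_mulVec {Q : Matrix m m R} (hQ : Q.IsSymm) (v : p → R) :
    (frobForm (R := R)).IsSelfAdjoint fun A : Matrix m p R ↦ vecMulVec (Q *ᵥ A *ᵥ v) v := by
  intro A B
  calc frobForm (vecMulVec (Q *ᵥ A *ᵥ v) v) B
      = B *ᵥ v ⬝ᵥ Q *ᵥ A *ᵥ v := by rw [frobForm_vecMulVec_left, dotProduct_comm]
    _ = A *ᵥ v ⬝ᵥ Q *ᵥ B *ᵥ v := by rw [← dotProduct_transpose_mulVec, hQ.eq]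
    _ = frobForm A (vecMulVec (Q *ᵥ B *ᵥ v) v) := by
      rw [frobForm_comm, frobForm_vecMulVec_left, dotProduct_comm]

theorem emt_major_symmetry_general {C : Matrix m p R → Matrix m p R}
    (hC : frobForm.IsSelfAdjoint C) {Q : Matrix m m R} (hQ : Q.IsSymm) (v : p → R) :
    frobForm.IsSelfAdjoint fun A ↦ C A + C (vecMulVec (Q *ᵥ C A *ᵥ v) v) :=
  hC.add ((hC.comp (frobForm_isSelfAdjoint_vecMulVec_mulVec hQ v)).comp hC)

end Frobenius

theorem frobForm_isSelfAdjoint_symPart : frobForm.IsSelfAdjoint symPart :=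
  (LinearMap.isAdjointPair_id.add frobForm_isSelfAdjoint_transpose).smul (1 / 2)

theorem frobForm_isSelfAdjoint_elastC (lam mu : ℝ) : frobForm.IsSelfAdjoint (elastC lam mu) := by
  have elastC_eq : elastC lam mu =
      (2 * mu) • symPart + lam • fun A ↦ A.trace • (1 : Matrix (Fin 3) (Fin 3) ℝ) := by
    funext A
    simp only [elastC, Pi.add_apply, Pi.smul_apply, mul_smul]
  rw [elastC_eq]
  exact (frobForm_isSelfAdjoint_symPart.smul (2 * mu)).add
    (frobForm_isSelfAdjoint_trace_smul_one.smul lam)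

theorem frobForm_isSelfAdjoint_Cdiff (lami mui lame mue : ℝ) :
    frobForm.IsSelfAdjoint (Cdiff lami mui lame mue) :=
  (frobForm_isSelfAdjoint_elastC lame mue).sub (frobForm_isSelfAdjoint_elastC lami mui)

theorem isSymm_Qmat (lami mui : ℝ) (n : Fin 3 → ℝ) : (Qmat lami mui n).IsSymm :=
  ((isSymm_one.smul mui).add (IsSymm.smul (transpose_vecMulVec n n) (lami + mui))).inv

/-- Major symmetry of the elastic moment tensor: `𝕄A · B = A · 𝕄B` for all
symmetric matrices `A`, `B`. -/
theorem emt_major_symmetry (lami mui lame mue : ℝ)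
    (hmui : mui > 0) (hsum : lami + mui > 0)
    (n : Fin 3 → ℝ) (hn : n ⬝ᵥ n = 1)
    (A B : Matrix (Fin 3) (Fin 3) ℝ) (hA : A.IsSymm) (hB : B.IsSymm) :
    frob (emt lami mui lame mue n A) B = frob A (emt lami mui lame mue n B) :=
  emt_major_symmetry_general (frobForm_isSelfAdjoint_Cdiff lami mui lame mue)
    (isSymm_Qmat lami mui n) n A B
end

section
/- Assume in addition that μᵉ − μⁱ ≥ α₁ and 2(μᵉ − μⁱ) + 3(λᵉ − λⁱ) ≥ γ₁ for some positive constants α₁, γ₁. Then for every symmetric real 3×3 matrix A, 𝕄A · A ≥ min{2α₁, γ₁} |A|². -/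
open Matrix

/-- Frobenius norm of a real 3×3 matrix. -/
noncomputable def frobNorm (A : Matrix (Fin 3) (Fin 3) ℝ) : ℝ := Real.sqrt (frob A A)

/-!
Write `v = (ℂᵉ − ℂⁱ)A n`. Since `ℂᵉ − ℂⁱ` is self-adjoint for the Frobenius inner product,
`𝕄A · A = (ℂᵉ − ℂⁱ)A · A + v · Qv`, and `v · Qv ≥ 0` because `Q` is the inverse of a positive
definite matrix. The difference `ℂᵉ − ℂⁱ` is itself isotropic, with Lamé parameters `λ = λᵉ − λⁱ`
and `μ = μᵉ − μⁱ`, so for symmetric `A` the first term is `2μ|A|² + λ(tr A)²`, a combination of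
`|A|² − (tr A)²/3 ≥ 0` and `(tr A)²/3` with coefficients `2μ` and `2μ + 3λ`.
-/

theorem trace_sq_le_card_mul_trace_mul_transpose {ι R : Type*} [Fintype ι] [CommRing R]
    [LinearOrder R] [IsStrictOrderedRing R] (A : Matrix ι ι R) :
    A.trace ^ 2 ≤ Fintype.card ι * (A * Aᵀ).trace := by
  have diag_sq_le (i : ι) : A i i ^ 2 ≤ (A * Aᵀ) i i := by
    simp only [mul_apply, transpose_apply, ← pow_two]
    exact Finset.single_le_sum (f := fun j => A i j ^ 2) (fun j _ => sq_nonneg _)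
      (Finset.mem_univ i)
  calc A.trace ^ 2 ≤ Fintype.card ι * ∑ i, A i i ^ 2 := sq_sum_le_card_mul_sum_sq
    _ ≤ Fintype.card ι * (A * Aᵀ).trace :=
      mul_le_mul_of_nonneg_left (Finset.sum_le_sum fun i _ => diag_sq_le i) (Nat.cast_nonneg _)

theorem posDef_smul_one_add_smul_vecMulVec_self_star {ι R : Type*} [Finite ι] [DecidableEq ι]
    [CommRing R] [NoZeroDivisors R] [PartialOrder R] [PosMulStrictMono R] [StarRing R]
    [StarOrderedRing R] {a b : R} (ha : 0 < a) (hb : 0 ≤ b) (v : ι → R) :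
    (a • (1 : Matrix ι ι R) + b • vecMulVec v (star v)).PosDef :=
  (PosDef.one.smul ha).add_posSemidef ((posSemidef_vecMulVec_self_star v).smul hb)

section Frobenius

variable (A B C : Matrix (Fin 3) (Fin 3) ℝ)

theorem frob_eq_trace_mul_transpose : frob A B = (A * Bᵀ).trace :=
  sum_hadamard_eq A B

theorem frob_add_left : frob (A + B) C = frob A C + frob B C := by
  simp only [frob_eq_trace_mul_transpose, Matrix.add_mul, trace_add]

theorem frob_smul_left (c : ℝ) : frob (c • A) B = c * frob A B := by
  simp only [frob_eq_trace_mul_transpose, Matrix.smul_mul, trace_smul, smul_eq_mul]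

theorem frob_comm : frob A B = frob B A := by
  simp only [frob, mul_comm]

theorem frob_transpose_left : frob Aᵀ B = frob A Bᵀ :=
  Finset.sum_comm

theorem frob_one_left : frob 1 A = A.trace := by
  rw [frob_eq_trace_mul_transpose, Matrix.one_mul, trace_transpose]

theorem frob_vecMulVec_left (v w : Fin 3 → ℝ) : frob (vecMulVec v w) A = v ⬝ᵥ A *ᵥ w := by
  rw [frob_eq_trace_mul_transpose, vecMulVec_mul, trace_vecMulVec, vecMul_transpose]

theorem frob_self_nonneg : 0 ≤ frob A A :=
  Finset.sum_nonneg fun _ _ => Finset.sum_nonneg fun _ _ => mul_self_nonneg _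

theorem frobNorm_sq : frobNorm A ^ 2 = frob A A :=
  Real.sq_sqrt (frob_self_nonneg A)

theorem trace_sq_le_three_mul_frob_self : A.trace ^ 2 ≤ 3 * frob A A := by
  simpa [frob_eq_trace_mul_transpose] using trace_sq_le_card_mul_trace_mul_transpose A

end Frobenius

section ElasticityTensor

variable (A B : Matrix (Fin 3) (Fin 3) ℝ)

theorem frob_symPart_comm : frob (symPart A) B = frob A (symPart B) := by
  rw [frob_comm A, symPart, symPart]
  simp only [frob_smul_left, frob_add_left, frob_transpose_left, frob_comm A]

theorem frob_elastC_left (lam mu : ℝ) :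
    frob (elastC lam mu A) B = 2 * mu * frob (symPart A) B + lam * A.trace * B.trace := by
  rw [elastC, frob_add_left, frob_smul_left, frob_smul_left, frob_one_left]

theorem frob_elastC_comm (lam mu : ℝ) :
    frob (elastC lam mu A) B = frob A (elastC lam mu B) := by
  rw [frob_comm A, frob_elastC_left, frob_elastC_left, frob_symPart_comm, frob_comm A]
  ring

theorem Cdiff_eq_elastC (lami mui lame mue : ℝ) :
    Cdiff lami mui lame mue A = elastC (lame - lami) (mue - mui) A := by
  rw [Cdiff, elastC, elastC, elastC]
  module

variable {A}

theorem symPart_of_isSymm (hA : A.IsSymm) : symPart A = A := by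
  rw [symPart, hA.eq, ← two_smul ℝ A, smul_smul]
  norm_num

theorem mul_frob_self_le_frob_elastC_self {lam mu c : ℝ} (hmu : c ≤ 2 * mu)
    (hlam : c ≤ 2 * mu + 3 * lam) (hA : A.IsSymm) :
    c * frob A A ≤ frob (elastC lam mu A) A := by
  have shear : 0 ≤ (2 * mu - c) * (frob A A - A.trace ^ 2 / 3) :=
    mul_nonneg (by linarith) (by linarith [trace_sq_le_three_mul_frob_self A])
  have bulk : 0 ≤ (2 * mu + 3 * lam - c) * (A.trace ^ 2 / 3) :=
    mul_nonneg (by linarith) (by positivity)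
  rw [frob_elastC_left, symPart_of_isSymm hA]
  linarith

end ElasticityTensor

theorem frob_emt_self (lami mui lame mue : ℝ) (n : Fin 3 → ℝ) (A : Matrix (Fin 3) (Fin 3) ℝ) :
    frob (emt lami mui lame mue n A) A = frob (Cdiff lami mui lame mue A) A +
      (Cdiff lami mui lame mue A *ᵥ n) ⬝ᵥ
        (Qmat lami mui n *ᵥ (Cdiff lami mui lame mue A *ᵥ n)) := by
  rw [emt, frob_add_left, Cdiff_eq_elastC (vecMulVec _ _), frob_elastC_comm,
    ← Cdiff_eq_elastC, frob_vecMulVec_left, dotProduct_comm]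

theorem emt_positivity_general {lami mui lame mue a1 g1 : ℝ} {n : Fin 3 → ℝ}
    (hP : (mui • (1 : Matrix (Fin 3) (Fin 3) ℝ) + (lami + mui) • vecMulVec n n).PosDef)
    (h1 : a1 ≤ mue - mui) (h2 : g1 ≤ 2 * (mue - mui) + 3 * (lame - lami))
    {A : Matrix (Fin 3) (Fin 3) ℝ} (hA : A.IsSymm) :
    min (2 * a1) g1 * frobNorm A ^ 2 ≤ frob (emt lami mui lame mue n A) A := by
  have Qmat_posDef : (Qmat lami mui n).PosDef := hP.inv
  calc min (2 * a1) g1 * frobNorm A ^ 2 = min (2 * a1) g1 * frob A A := by rw [frobNorm_sq]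
    _ ≤ frob (Cdiff lami mui lame mue A) A := by
      rw [Cdiff_eq_elastC]
      exact mul_frob_self_le_frob_elastC_self ((min_le_left _ _).trans (by linarith))
        ((min_le_right _ _).trans h2) hA
    _ ≤ frob (emt lami mui lame mue n A) A := by
      rw [frob_emt_self]
      exact le_add_of_nonneg_right (Qmat_posDef.posSemidef.dotProduct_mulVec_nonneg _)

/-- Positivity of the elastic moment tensor under the monotonicity assumption
`μᵉ − μⁱ ≥ α₁ > 0`, `2(μᵉ−μⁱ) + 3(λᵉ−λⁱ) ≥ γ₁ > 0`:
`𝕄A · A ≥ min{2α₁, γ₁} |A|²` for every symmetric `A`. -/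
theorem emt_positivity (lami mui lame mue a1 g1 : ℝ)
    (hmui : mui > 0) (hsum : lami + mui > 0)
    (n : Fin 3 → ℝ) (hn : n ⬝ᵥ n = 1)
    (ha1 : a1 > 0) (hg1 : g1 > 0)
    (h1 : mue - mui ≥ a1) (h2 : 2 * (mue - mui) + 3 * (lame - lami) ≥ g1)
    (A : Matrix (Fin 3) (Fin 3) ℝ) (hA : A.IsSymm) :
    frob (emt lami mui lame mue n A) A ≥ min (2 * a1) g1 * frobNorm A ^ 2 := by
  exact emt_positivity_general
    (posDef_smul_one_add_smul_vecMulVec_self_star hmui hsum.le n) h1 h2 hA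
end

section
/- Define, for γ > 0 and ν, ν' ∈ ℝ, g_γ(ν, ν') = (3γ⁵ + (1−4ν)γ³)·(1 + (3−4ν)(3−4ν')) + (4ν'−2)·{(3−4ν)·[(4ν−1)γ³ − 6γ⁵] + 15γ⁵ − 12νγ⁵ − 2γ³} − 4γ³(1−ν)(1−2ν')(3−4ν). Then for every γ with 2/3 ≤ γ² ≤ 1 and all ν, ν' ∈ [0, 1/2], one has g_γ(ν, ν') ≥ 0. -/
/-- The coefficient `g_γ(ν, ν')` of the mixed term `μμ'` in the expansion of
`16r²(1−ν)πμ ∂Γ^R₃₃/∂x₃` for the Rongved bi-phase fundamental solution. -/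
def gCoeff (γ ν ν' : ℝ) : ℝ :=
  (3 * γ ^ 5 + (1 - 4 * ν) * γ ^ 3) * (1 + (3 - 4 * ν) * (3 - 4 * ν'))
    + (4 * ν' - 2) *
        ((3 - 4 * ν) * ((4 * ν - 1) * γ ^ 3 - 6 * γ ^ 5)
          + 15 * γ ^ 5 - 12 * ν * γ ^ 5 - 2 * γ ^ 3)
    - 4 * γ ^ 3 * (1 - ν) * (1 - 2 * ν') * (3 - 4 * ν)

/-!
The coefficient is affine in `ν'`, so it suffices to treat the endpoints `ν' = 0` and `ν' = 1 / 2`.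
There it equals `4 * γ ^ 3` times a sum of products of factors that are nonnegative as soon as
`3 * γ ^ 2 - 2 ≥ 0` and `ν ≤ 1 / 2`.
-/

theorem gCoeff_eq_affine_combination (γ ν ν' : ℝ) :
    gCoeff γ ν ν' = (1 - 2 * ν') * gCoeff γ ν 0 + 2 * ν' * gCoeff γ ν (1 / 2) := by
  unfold gCoeff
  ring

theorem gCoeff_zero_right (γ ν : ℝ) :
    gCoeff γ ν 0 =
      4 * γ ^ 3 * ((3 * γ ^ 2 - 2) * (3 - 5 * ν) + 8 * ((1 - 2 * ν) * (1 - ν))) := by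
  unfold gCoeff
  ring

theorem gCoeff_half_right (γ ν : ℝ) :
    gCoeff γ ν (1 / 2) = 4 * γ ^ 3 * ((1 - ν) * (3 * γ ^ 2 + 1 - 4 * ν)) := by
  unfold gCoeff
  ring

section Nonneg

variable {γ ν ν' : ℝ}

theorem gCoeff_zero_right_nonneg (hγ : 0 ≤ γ) (hγ2 : 2 / 3 ≤ γ ^ 2) (hν : ν ≤ 1 / 2) :
    0 ≤ gCoeff γ ν 0 := by
  have h_gamma_term : 0 ≤ (3 * γ ^ 2 - 2) * (3 - 5 * ν) :=
    mul_nonneg (by linarith) (by linarith)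
  have h_nu_term : 0 ≤ (1 - 2 * ν) * (1 - ν) :=
    mul_nonneg (by linarith) (by linarith)
  rw [gCoeff_zero_right]
  positivity

theorem gCoeff_half_right_nonneg (hγ : 0 ≤ γ) (hν : ν ≤ 1) (hγν : 4 * ν ≤ 3 * γ ^ 2 + 1) :
    0 ≤ gCoeff γ ν (1 / 2) := by
  have h_factors : 0 ≤ (1 - ν) * (3 * γ ^ 2 + 1 - 4 * ν) :=
    mul_nonneg (by linarith) (by linarith)
  rw [gCoeff_half_right]
  exact mul_nonneg (by positivity) h_factors

theorem gCoeff_nonneg_general (hγ : 0 ≤ γ) (hγ2 : 2 / 3 ≤ γ ^ 2) (hν : ν ≤ 1 / 2)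
    (hν' : ν' ∈ Set.Icc (0 : ℝ) (1 / 2)) : 0 ≤ gCoeff γ ν ν' := by
  obtain ⟨hν'_nonneg, hν'_le⟩ := hν'
  have h_zero : 0 ≤ gCoeff γ ν 0 := gCoeff_zero_right_nonneg hγ hγ2 hν
  have h_half : 0 ≤ gCoeff γ ν (1 / 2) :=
    gCoeff_half_right_nonneg hγ (by linarith) (by linarith)
  have h_weight : 0 ≤ 1 - 2 * ν' := by linarith
  rw [gCoeff_eq_affine_combination]
  positivity

end Nonneg

/-- For `2/3 ≤ γ² ≤ 1` and `ν, ν' ∈ [0, 1/2]`, the mixed coefficient `g_γ(ν, ν')`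
is nonnegative. -/
theorem gCoeff_nonneg (γ ν ν' : ℝ) (hγ : γ > 0)
    (hγ2 : 2 / 3 ≤ γ ^ 2) (hγ2' : γ ^ 2 ≤ 1)
    (hν : ν ∈ Set.Icc (0 : ℝ) (1 / 2)) (hν' : ν' ∈ Set.Icc (0 : ℝ) (1 / 2)) :
    gCoeff γ ν ν' ≥ 0 :=
  gCoeff_nonneg_general hγ.le hγ2 hν.2 hν'
end

section
/- For every ν ∈ [0, 1/2] and every γ with √(2/3) ≤ γ ≤ 1, one has 4γ³·(2 − 8ν + 3γ² − 6νγ² + 8ν²) ≥ (32√2/(3√3))·(1−ν)(1−2ν). -/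
/-!
The right-hand side is the value of the left-hand side at `γ = √(2/3)`. The left-hand side factors
as `4γ³(1 − 2ν)(2(1 − 2ν) + 3γ²)`, which for `ν ≤ 1/2` is increasing in `γ ≥ 0`.
-/

/-- The coefficient `B` of `(μ')²` in the expansion of `16r²(1−ν)πμ ∂Γ^R₃₃/∂x₃` on the interface
circle, as a function of Poisson's ratio `ν` and of `γ = 1/√(α² + 1)`. -/
def bCoeff (ν γ : ℝ) : ℝ :=
  4 * γ ^ 3 * (2 - 8 * ν + 3 * γ ^ 2 - 6 * ν * γ ^ 2 + 8 * ν ^ 2)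

theorem bCoeff_eq_mul (ν γ : ℝ) :
    bCoeff ν γ = 4 * γ ^ 3 * ((1 - 2 * ν) * (2 * (1 - 2 * ν) + 3 * γ ^ 2)) := by
  unfold bCoeff
  ring

theorem monotoneOn_bCoeff {ν : ℝ} (hν : ν ≤ 1 / 2) : MonotoneOn (bCoeff ν) (Set.Ici 0) := by
  intro s (hs : 0 ≤ s) γ (hγ : 0 ≤ γ) hsγ
  have one_sub_nonneg : 0 ≤ 1 - 2 * ν := by linarith
  simp only [bCoeff_eq_mul]
  gcongr

theorem bCoeff_sqrt_two_thirds (ν : ℝ) :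
    bCoeff ν √(2 / 3) = (32 * √2 / (3 * √3)) * (1 - ν) * (1 - 2 * ν) := by
  have sq_eq : √(2 / 3 : ℝ) ^ 2 = 2 / 3 := Real.sq_sqrt (by norm_num)
  have cube_eq : √(2 / 3 : ℝ) ^ 3 = 2 / 3 * (√2 / √3) := by
    rw [pow_succ, sq_eq, Real.sqrt_div zero_le_two]
  rw [bCoeff_eq_mul, cube_eq, sq_eq]
  ring

theorem B_coeff_lower_bound_general {ν γ : ℝ} (hν : ν ≤ 1 / 2) (hγ : √(2 / 3) ≤ γ) :
    (32 * √2 / (3 * √3)) * (1 - ν) * (1 - 2 * ν) ≤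
      4 * γ ^ 3 * (2 - 8 * ν + 3 * γ ^ 2 - 6 * ν * γ ^ 2 + 8 * ν ^ 2) :=
  have sqrt_nonneg : 0 ≤ √(2 / 3 : ℝ) := Real.sqrt_nonneg _
  calc (32 * √2 / (3 * √3)) * (1 - ν) * (1 - 2 * ν)
      = bCoeff ν √(2 / 3) := (bCoeff_sqrt_two_thirds ν).symm
    _ ≤ bCoeff ν γ := monotoneOn_bCoeff hν sqrt_nonneg (sqrt_nonneg.trans hγ) hγ

/-- Lower bound on the coefficient `B` of `(μ')²` in the expansion of
`16r²(1−ν)πμ ∂Γ^R₃₃/∂x₃`: for `ν ∈ [0, 1/2]` and `√(2/3) ≤ γ ≤ 1`,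
`4γ³(2 − 8ν + 3γ² − 6νγ² + 8ν²) ≥ (32√2/(3√3))(1−ν)(1−2ν)`. -/
theorem B_coeff_lower_bound (ν γ : ℝ)
    (hν : ν ∈ Set.Icc (0 : ℝ) (1 / 2))
    (hγ : Real.sqrt (2 / 3) ≤ γ) (hγ1 : γ ≤ 1) :
    4 * γ ^ 3 * (2 - 8 * ν + 3 * γ ^ 2 - 6 * ν * γ ^ 2 + 8 * ν ^ 2)
      ≥ (32 * Real.sqrt 2 / (3 * Real.sqrt 3)) * (1 - ν) * (1 - 2 * ν) :=
  B_coeff_lower_bound_general hν.2 hγ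
end

section
/- Let n ≥ 1, let M ≥ 0, and let 𝒰 : ℝⁿ → ℝⁿ be a continuous map such that ‖𝒰(x)‖ ≤ M for all x ∈ ℝⁿ. Then the map Φ(x) = x + 𝒰(x) is surjective; more precisely, for every y ∈ ℝⁿ there exists x ∈ ℝⁿ with ‖x − y‖ ≤ M and Φ(x) = y. -/
/-!
It suffices to solve `x + V x = 0` when `V` is `C¹` with compact support: cutting off and smoothly
approximating a bounded continuous `𝒰` gives approximate solutions in a fixed ball, and compactness
does the rest. For such a `V` we follow the Milnor–Rogers proof of Brouwer's theorem. Fix a closed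
ball `K` centred at `0` containing the support of `V`. For small `t` the map `F_t x = x + t • V x`
is a bijection of `K` with positive Jacobian, so `∫_K p(‖F_t x‖²) det(F_t' x) = ∫_K p(‖x‖²)` for
every real polynomial `p`. The left-hand side is a polynomial in `t`, hence the identity persists
at `t = 1`, and by the Weierstrass theorem `p` may be replaced by any continuous function. If `F_1`
had no zero in `K`, a nonnegative bump function concentrated near `0` would make the left-hand side
zero and the right-hand side positive.
-/

open Filter Function MeasureTheory Metric Polynomial Set Topology

theorem image_eq_self_of_bijective_of_eqOn_compl {α : Type*} {f : α → α} {s : Set α}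
    (hf : Bijective f) (hfs : EqOn f id sᶜ) : f '' s = s := by
  rw [← compl_inj_iff, ← image_compl_eq hf, hfs.image_eq, image_id]

section PolynomialFamilies

theorem exists_polynomial_eval_eq_integral {X : Type*} [MeasurableSpace X] {μ : Measure X}
    {d : ℕ} {f : ℝ → X → ℝ} (hf : ∀ x, ∃ p : ℝ[X], p.natDegree ≤ d ∧ ∀ t, p.eval t = f t x)
    (hf_int : ∀ t, Integrable (f t) μ) :
    ∃ P : ℝ[X], ∀ t, P.eval t = ∫ x, f t x ∂μ := by
  let s := Finset.range (d + 1)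
  let node : ℕ → ℝ := Nat.cast
  have node_injOn : InjOn node s := Nat.cast_injective.injOn
  have interpolation (t : ℝ) (x : X) :
      f t x = ∑ i ∈ s, f (node i) x * (Lagrange.basis s node i).eval t := by
    obtain ⟨p, p_natDegree, p_eval⟩ := hf x
    have p_degree : p.degree < s.card := by
      rw [Finset.card_range]
      exact degree_lt_iff_coeff_zero _ _ |>.2 fun m hm =>
        coeff_eq_zero_of_natDegree_lt (by lia)
    rw [← p_eval, Lagrange.eq_interpolate node_injOn p_degree, Lagrange.interpolate_apply,
      eval_finsetSum]
    simp only [eval_mul, eval_C, p_eval]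
  refine ⟨Lagrange.interpolate s node fun i => ∫ x, f (node i) x ∂μ, fun t => ?_⟩
  simp only [interpolation t, Lagrange.interpolate_apply, eval_finsetSum, eval_mul, eval_C]
  rw [integral_finsetSum _ fun i _ => (hf_int (node i)).mul_const _]
  simp only [integral_mul_const]

theorem exists_polynomial_eval_eq_det_one_add_smul {R M : Type*} [CommRing R] [Nontrivial R]
    [AddCommGroup M] [Module R M] [Module.Free R M] [Module.Finite R M] (f : Module.End R M) :
    ∃ p : R[X], p.natDegree ≤ Module.finrank R M ∧ ∀ t, p.eval t = LinearMap.det (1 + t • f) := by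
  classical
  let b := Module.Free.chooseBasis R M
  let m := LinearMap.toMatrix b b f
  refine ⟨((X : R[X]) • m.map C + (1 : Matrix _ _ R).map C).det, ?_, fun t => ?_⟩
  · rw [Module.finrank_eq_card_chooseBasisIndex]
    exact natDegree_det_X_add_C_le m 1
  · rw [← LinearMap.det_toMatrix b, map_add, map_smul, LinearMap.toMatrix_one,
      ← coe_evalRingHom, RingHom.map_det]
    congr 1
    ext i j
    by_cases hij : i = j <;> simp [m, Matrix.map_apply, hij, add_comm, mul_comm t]

theorem exists_polynomial_eval_eq_eval_norm_add_smul_sq {E : Type*} [NormedAddCommGroup E]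
    [InnerProductSpace ℝ E] (p : ℝ[X]) (w v : E) :
    ∃ q : ℝ[X], q.natDegree ≤ p.natDegree * 2 ∧ ∀ t, q.eval t = p.eval (‖w + t • v‖ ^ 2) := by
  let normSq : ℝ[X] := C (‖v‖ ^ 2) * X ^ 2 + C (2 * inner ℝ w v) * X + C (‖w‖ ^ 2)
  refine ⟨p.comp normSq, ?_, fun t => ?_⟩
  · exact natDegree_comp_le.trans (Nat.mul_le_mul_left _ natDegree_quadratic_le)
  · rw [eval_comp, norm_add_sq_real, inner_smul_right, norm_smul, mul_pow, Real.norm_eq_abs,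
      sq_abs]
    simp only [normSq, eval_add, eval_mul, eval_C, eval_pow, eval_X]
    congr 1
    ring

end PolynomialFamilies

theorem setIntegral_pos_of_continuous_of_mem_nhds {X : Type*} [TopologicalSpace X]
    [MeasurableSpace X] {μ : Measure X} [μ.IsOpenPosMeasure] {f : X → ℝ} (hf : Continuous f)
    (hf_nonneg : 0 ≤ f) {x : X} (hx : 0 < f x) {s : Set X} (hs : s ∈ 𝓝 x)
    (hfs : IntegrableOn f s μ) : 0 < ∫ x in s, f x ∂μ :=
  (setIntegral_pos_iff_support_of_nonneg_ae (.of_forall hf_nonneg) hfs).2 <|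
    Measure.measure_pos_of_mem_nhds μ (inter_mem (hf.isOpen_support.mem_nhds hx.ne') hs)

section Weierstrass

variable {X : Type*} [MeasurableSpace X] {μ : Measure X}

theorem tendsto_setIntegral_mul_of_tendstoUniformlyOn {s : Set X} (hs : MeasurableSet s)
    {f : ℕ → X → ℝ} {g w : X → ℝ} (hfg : TendstoUniformlyOn f g atTop s)
    (hf : ∀ n, AEStronglyMeasurable (f n) (μ.restrict s)) (hw : IntegrableOn w s μ)
    (hgw : IntegrableOn (fun x => g x * w x) s μ) :
    Tendsto (fun n => ∫ x in s, f n x * w x ∂μ) atTop (𝓝 (∫ x in s, g x * w x ∂μ)) := by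
  refine tendsto_integral_filter_of_dominated_convergence (fun x => ‖w x‖ + ‖g x * w x‖)
    (.of_forall fun n => (hf n).mul hw.aestronglyMeasurable) ?_ (hw.norm.add hgw.norm) ?_
  · filter_upwards [tendstoUniformlyOn_iff.1 hfg 1 one_pos] with n hn
    filter_upwards [ae_restrict_mem hs] with x hx
    have f_near_g : ‖f n x - g x‖ ≤ 1 := by
      rw [← dist_eq_norm, dist_comm]
      exact (hn x hx).le
    calc ‖f n x * w x‖ = ‖(f n x - g x) * w x + g x * w x‖ := by congr 1; ring
      _ ≤ ‖f n x - g x‖ * ‖w x‖ + ‖g x * w x‖ := (norm_add_le _ _).trans_eq (by rw [norm_mul])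
      _ ≤ ‖w x‖ + ‖g x * w x‖ := by
        gcongr
        exact mul_le_of_le_one_left (norm_nonneg _) f_near_g
  · filter_upwards [ae_restrict_mem hs] with x hx
    exact (hfg.tendsto_at hx).mul_const _

theorem exists_polynomial_tendstoUniformlyOn_Icc {u : ℝ → ℝ} {a b : ℝ}
    (hu : ContinuousOn u (Icc a b)) :
    ∃ p : ℕ → ℝ[X], TendstoUniformlyOn (fun n x => (p n).eval x) u atTop (Icc a b) := by
  choose p hp using fun n : ℕ =>
    exists_polynomial_near_of_continuousOn a b u hu (1 / (n + 1)) Nat.one_div_pos_of_nat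
  refine ⟨p, tendstoUniformlyOn_iff.2 fun ε hε => ?_⟩
  filter_upwards [tendsto_one_div_add_atTop_nhds_zero_nat.eventually_lt_const hε] with n hn x hx
  rw [dist_comm, Real.dist_eq]
  exact (hp n x hx).trans hn

variable [TopologicalSpace X] [T2Space X] [OpensMeasurableSpace X] [IsFiniteMeasureOnCompacts μ]

theorem setIntegral_comp_mul_eq_of_forall_polynomial {K : Set X} (hK : IsCompact K)
    {φ ψ v w : X → ℝ} (hφ : ContinuousOn φ K) (hψ : ContinuousOn ψ K) (hv : ContinuousOn v K)
    (hw : ContinuousOn w K)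
    (hpoly : ∀ p : ℝ[X], ∫ x in K, p.eval (φ x) * v x ∂μ = ∫ x in K, p.eval (ψ x) * w x ∂μ)
    {u : ℝ → ℝ} (hu : Continuous u) :
    ∫ x in K, u (φ x) * v x ∂μ = ∫ x in K, u (ψ x) * w x ∂μ := by
  have images_compact : IsCompact (φ '' K ∪ ψ '' K) :=
    (hK.image_of_continuousOn hφ).union (hK.image_of_continuousOn hψ)
  obtain ⟨a, b, images_subset⟩ := bddBelow_bddAbove_iff_subset_Icc.1
    ⟨images_compact.bddBelow, images_compact.bddAbove⟩
  obtain ⟨φ_mapsTo, ψ_mapsTo⟩ : MapsTo φ K (Icc a b) ∧ MapsTo ψ K (Icc a b) := by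
    simpa only [union_subset_iff, ← mapsTo_iff_image_subset] using images_subset
  obtain ⟨p, hp⟩ := exists_polynomial_tendstoUniformlyOn_Icc (a := a) (b := b) hu.continuousOn
  have tendsto_integral {θ z : X → ℝ} (hθ : ContinuousOn θ K) (hz : ContinuousOn z K)
      (θ_mapsTo : MapsTo θ K (Icc a b)) :
      Tendsto (fun n => ∫ x in K, (p n).eval (θ x) * z x ∂μ) atTop
        (𝓝 (∫ x in K, u (θ x) * z x ∂μ)) :=
    tendsto_setIntegral_mul_of_tendstoUniformlyOn hK.measurableSet ((hp.comp θ).mono θ_mapsTo)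
      (fun n => (((p n).continuous.comp_continuousOn hθ).integrableOn_compact
        hK).aestronglyMeasurable)
      (hz.integrableOn_compact hK) (((hu.comp_continuousOn hθ).mul hz).integrableOn_compact hK)
  refine tendsto_nhds_unique (tendsto_integral hφ hv φ_mapsTo) ?_
  simpa only [hpoly] using tendsto_integral hψ hw ψ_mapsTo

end Weierstrass

section SmallPerturbations

variable {E : Type*} [NormedAddCommGroup E]

theorem bijective_add_of_lipschitzWith_lt_one [CompleteSpace E] {c : NNReal} {U : E → E}
    (hU : LipschitzWith c U) (hc : c < 1) : Bijective fun x => x + U x := by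
  refine ⟨?_, fun z => ?_⟩
  · exact (AntilipschitzWith.id.add_lipschitzWith hU (by rwa [inv_one])).injective
  · have contracting : ContractingWith c fun x => z - U x :=
      ⟨hc, .of_dist_le_mul fun x y => by rw [dist_sub_left]; exact hU.dist_le_mul x y⟩
    exact ⟨contracting.fixedPoint _, eq_sub_iff_add_eq.1 contracting.fixedPoint_isFixedPt.symm⟩

variable [NormedSpace ℝ E] [FiniteDimensional ℝ E]

theorem det_one_add_pos_of_norm_lt_one {A : E →L[ℝ] E} (hA : ‖A‖ < 1) : 0 < (1 + A).det := by
  have := FiniteDimensional.complete ℝ E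
  have det_ne_zero {B : E →L[ℝ] E} (hB : B ∈ ball 0 1) : (1 + B).det ≠ 0 := by
    have one_add_isUnit : IsUnit (1 + B) := by
      simpa using isUnit_one_sub_of_norm_lt_one (x := -B) (by simpa using hB)
    exact ((one_add_isUnit.map ContinuousLinearMap.toLinearMapRingHom).map LinearMap.det).ne_zero
  have det_continuous : Continuous fun B : E →L[ℝ] E => (1 + B).det :=
    ContinuousLinearMap.continuous_det.comp (by fun_prop)
  by_contra! det_nonpos
  have zero_mem_Icc : (0 : ℝ) ∈ Icc (1 + A).det (1 + (0 : E →L[ℝ] E)).det :=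
    ⟨det_nonpos, by simp [ContinuousLinearMap.det]⟩
  obtain ⟨B, hB, hB_det⟩ := (convex_ball (0 : E →L[ℝ] E) 1).isPreconnected.intermediate_value
    (by simpa using hA) (mem_ball_self one_pos) det_continuous.continuousOn zero_mem_Icc
  exact det_ne_zero hB hB_det

variable [MeasurableSpace E] [BorelSpace E] {μ : Measure E} [μ.IsAddHaarMeasure]

theorem setIntegral_comp_add_mul_det_of_lipschitzWith_lt_one {K : Set E} (hK : MeasurableSet K)
    {U : E → E} (hU : Differentiable ℝ U) {c : NNReal} (hUc : LipschitzWith c U) (hc : c < 1)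
    (hUK : ∀ x ∉ K, U x = 0) (g : E → ℝ) :
    ∫ x in K, g (x + U x) * (1 + fderiv ℝ U x).det ∂μ = ∫ x in K, g x ∂μ := by
  have := FiniteDimensional.complete ℝ E
  have add_bijective := bijective_add_of_lipschitzWith_lt_one hUc hc
  have image_eq : (fun x => x + U x) '' K = K :=
    image_eq_self_of_bijective_of_eqOn_compl add_bijective fun x hx => by simp [hUK x hx]
  have hasFDeriv (x : E) : HasFDerivAt (fun x => x + U x) (1 + fderiv ℝ U x) x :=
    (hasFDerivAt_id x).add (hU x).hasFDerivAt
  have det_pos (x : E) : 0 < (1 + fderiv ℝ U x).det :=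
    det_one_add_pos_of_norm_lt_one ((norm_fderiv_le_of_lipschitz ℝ hUc).trans_lt hc)
  have change_of_variables := integral_image_eq_integral_abs_det_fderiv_smul μ hK
    (fun x _ => (hasFDeriv x).hasFDerivWithinAt) add_bijective.injective.injOn g
  simpa only [image_eq, abs_of_pos (det_pos _), smul_eq_mul, mul_comm] using
    change_of_variables.symm

end SmallPerturbations

section CompactlySupportedPerturbations

variable {E : Type*} [NormedAddCommGroup E] [InnerProductSpace ℝ E] [FiniteDimensional ℝ E]

section Integral

variable [MeasurableSpace E] [BorelSpace E] {μ : Measure E} {V : E → E} {K : Set E}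

theorem exists_polynomial_eval_eq_setIntegral_norm_sq_mul_det
    [IsFiniteMeasureOnCompacts μ] (hV : ContDiff ℝ 1 V) (hK : IsCompact K) (p : ℝ[X]) :
    ∃ P : ℝ[X], ∀ t, P.eval t =
      ∫ x in K, p.eval (‖x + t • V x‖ ^ 2) * (1 + t • fderiv ℝ V x).det ∂μ := by
  refine exists_polynomial_eval_eq_integral (d := p.natDegree * 2 + Module.finrank ℝ E)
    (fun x => ?_) fun t => ?_
  · obtain ⟨q, q_natDegree, q_eval⟩ := exists_polynomial_eval_eq_eval_norm_add_smul_sq p x (V x)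
    obtain ⟨r, r_natDegree, r_eval⟩ :=
      exists_polynomial_eval_eq_det_one_add_smul (fderiv ℝ V x : Module.End ℝ E)
    refine ⟨q * r, natDegree_mul_le_of_le q_natDegree r_natDegree, fun t => ?_⟩
    rw [eval_mul, q_eval, r_eval]
    rfl
  · have V_cont := hV.continuous
    have det_cont : Continuous fun x => (1 + t • fderiv ℝ V x).det :=
      ContinuousLinearMap.continuous_det.comp
        (continuous_const.add ((hV.continuous_fderiv one_ne_zero).const_smul t))
    exact ContinuousOn.integrableOn_compact hK (by fun_prop)

variable [μ.IsAddHaarMeasure]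

theorem setIntegral_polynomial_norm_sq_mul_det (hV : ContDiff ℝ 1 V) (hK : IsCompact K)
    (hVK : ∀ x ∉ K, V x = 0) (p : ℝ[X]) :
    ∫ x in K, p.eval (‖x + V x‖ ^ 2) * (1 + fderiv ℝ V x).det ∂μ =
      ∫ x in K, p.eval (‖x‖ ^ 2) ∂μ := by
  obtain ⟨L, hL⟩ := hV.lipschitzWith_of_hasCompactSupport (.intro hK hVK) one_ne_zero
  have V_diff : Differentiable ℝ V := hV.differentiable one_ne_zero
  obtain ⟨P, hP⟩ := exists_polynomial_eval_eq_setIntegral_norm_sq_mul_det (μ := μ) hV hK p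
  have small_mem_nhds : {t : ℝ | ‖t‖₊ * L < 1} ∈ 𝓝 0 :=
    (isOpen_lt (by fun_prop) continuous_const).mem_nhds (by simp)
  have P_eval_of_small {t : ℝ} (ht : ‖t‖₊ * L < 1) :
      P.eval t = (C (∫ x in K, p.eval (‖x‖ ^ 2) ∂μ)).eval t := by
    rw [hP, eval_C]
    simpa only [Pi.smul_apply, fderiv_const_smul (V_diff _)] using
      setIntegral_comp_add_mul_det_of_lipschitzWith_lt_one hK.measurableSet
        (V_diff.const_smul t) ((lipschitzWith_smul t).comp hL) ht (fun x hx => by simp [hVK x hx])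
        fun x => p.eval (‖x‖ ^ 2)
  have P_eq_C : P = C (∫ x in K, p.eval (‖x‖ ^ 2) ∂μ) :=
    eq_of_infinite_eval_eq _ _ <|
      (infinite_of_mem_nhds 0 small_mem_nhds).mono fun _ => P_eval_of_small
  simpa [P_eq_C] using (hP 1).symm

theorem setIntegral_comp_norm_sq_mul_det (hV : ContDiff ℝ 1 V) (hK : IsCompact K)
    (hVK : ∀ x ∉ K, V x = 0) {u : ℝ → ℝ} (hu : Continuous u) :
    ∫ x in K, u (‖x + V x‖ ^ 2) * (1 + fderiv ℝ V x).det ∂μ = ∫ x in K, u (‖x‖ ^ 2) ∂μ := by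
  have V_cont := hV.continuous
  have det_cont : Continuous fun x => (1 + fderiv ℝ V x).det :=
    ContinuousLinearMap.continuous_det.comp
      (continuous_const.add (hV.continuous_fderiv one_ne_zero))
  simpa only [mul_one] using setIntegral_comp_mul_eq_of_forall_polynomial
    (φ := fun x => ‖x + V x‖ ^ 2) (ψ := fun x => ‖x‖ ^ 2) (w := fun _ => 1) hK
    (by fun_prop) (by fun_prop) det_cont.continuousOn continuousOn_const
    (fun p => by simpa only [mul_one] using setIntegral_polynomial_norm_sq_mul_det hV hK hVK p) hu

end Integral

theorem exists_add_eq_zero_of_contDiff_of_hasCompactSupport {V : E → E} (hV : ContDiff ℝ 1 V)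
    (hVc : HasCompactSupport V) : ∃ x, x + V x = 0 := by
  borelize E
  by_contra! add_ne_zero
  obtain ⟨R, hR, tsupport_subset⟩ := hVc.isCompact.isBounded.subset_closedBall_lt 0 0
  let K : Set E := closedBall 0 R
  have K_compact : IsCompact K := isCompact_closedBall 0 R
  have V_eq_zero : ∀ x ∉ K, V x = 0 := fun x hx =>
    image_eq_zero_of_notMem_tsupport fun h => hx (tsupport_subset h)
  have V_cont := hV.continuous
  obtain ⟨δ, hδ, δ_le⟩ : ∃ δ > 0, ∀ x ∈ K, δ ≤ ‖x + V x‖ ^ 2 :=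
    K_compact.exists_forall_le' (by fun_prop) fun x _ => by
      have := norm_pos_iff.2 (add_ne_zero x)
      positivity
  let u : ℝ → ℝ := fun s => max (δ - s) 0
  have u_cont : Continuous u := by fun_prop
  have u_norm_sq_cont : Continuous fun x : E => u (‖x‖ ^ 2) := u_cont.comp (by fun_prop)
  have integral_eq_zero : ∫ x in K, u (‖x‖ ^ 2) = 0 := by
    rw [← setIntegral_comp_norm_sq_mul_det hV K_compact V_eq_zero u_cont]
    refine setIntegral_eq_zero_of_forall_eq_zero fun x hx => ?_
    simp only [u, max_eq_right (sub_nonpos.2 (δ_le x hx)), zero_mul]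
  have integral_pos : 0 < ∫ x in K, u (‖x‖ ^ 2) :=
    setIntegral_pos_of_continuous_of_mem_nhds u_norm_sq_cont (fun x => le_max_right _ _)
      (by simpa [u] using hδ) (closedBall_mem_nhds 0 hR)
      (u_norm_sq_cont.continuousOn.integrableOn_compact K_compact)
  exact integral_pos.ne' integral_eq_zero

end CompactlySupportedPerturbations

section BoundedPerturbations

variable {E : Type*} [NormedAddCommGroup E]

theorem exists_add_eq_zero_of_contDiff_of_bounded [InnerProductSpace ℝ E] [FiniteDimensional ℝ E]
    {U : E → E} {M : ℝ} (hU : ContDiff ℝ 1 U) (hUM : ∀ x, ‖U x‖ ≤ M) : ∃ x, x + U x = 0 := by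
  have M_nonneg : 0 ≤ M := (norm_nonneg _).trans (hUM 0)
  let χ : ContDiffBump (0 : E) := ⟨M + 1, M + 2, by linarith, by linarith⟩
  obtain ⟨x, hx⟩ := exists_add_eq_zero_of_contDiff_of_hasCompactSupport (χ.contDiff.smul hU)
    χ.hasCompactSupport.smul_right
  have norm_le : ‖x‖ ≤ M :=
    calc ‖x‖ = χ x * ‖U x‖ := by
          rw [← norm_neg, neg_eq_of_add_eq_zero_right hx, Pi.smul_apply', norm_smul,
            Real.norm_of_nonneg χ.nonneg]
      _ ≤ ‖U x‖ := mul_le_of_le_one_left (norm_nonneg _) χ.le_one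
      _ ≤ M := hUM x
  have χ_eq_one : χ x = 1 :=
    χ.one_of_mem_closedBall (mem_closedBall_zero_iff.2 (norm_le.trans (by simp [χ])))
  exact ⟨x, by simpa [χ_eq_one] using hx⟩

theorem exists_add_eq_zero_of_continuous_of_bounded [InnerProductSpace ℝ E]
    [FiniteDimensional ℝ E] {U : E → E} {M : ℝ} (hU : Continuous U) (hUM : ∀ x, ‖U x‖ ≤ M) :
    ∃ x, x + U x = 0 := by
  suffices zero_mem_closure : 0 ∈ closure ((fun x => x + U x) '' closedBall 0 (M + 1)) by
    have image_compact := (isCompact_closedBall (0 : E) (M + 1)).image (f := fun x => x + U x)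
      (by fun_prop)
    rw [image_compact.isClosed.closure_eq] at zero_mem_closure
    obtain ⟨x, -, hx⟩ := zero_mem_closure
    exact ⟨x, hx⟩
  refine Metric.mem_closure_iff.2 fun ε hε => ?_
  obtain ⟨W, hW, W_near, -⟩ := hU.exists_contDiff_approx 1 (ε := fun _ => min ε 1)
    continuous_const fun _ => by positivity
  have W_bound (x : E) : ‖W x‖ ≤ M + 1 :=
    calc ‖W x‖ ≤ ‖U x‖ + ‖W x - U x‖ := norm_le_norm_add_norm_sub' _ _
      _ ≤ M + 1 := by
        rw [← dist_eq_norm]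
        exact add_le_add (hUM x) ((W_near x).le.trans (min_le_right _ _))
  obtain ⟨x, hx⟩ := exists_add_eq_zero_of_contDiff_of_bounded hW W_bound
  refine ⟨x + U x, mem_image_of_mem _ ?_, ?_⟩
  · rw [mem_closedBall_zero_iff, ← norm_neg, neg_eq_of_add_eq_zero_right hx]
    exact W_bound x
  · rw [← hx, dist_add_left]
    exact (W_near x).trans_le (min_le_left _ _)

theorem perturbed_identity_surjective_general [NormedSpace ℝ E] [FiniteDimensional ℝ E]
    {U : E → E} {M : ℝ} (hU : Continuous U) (hUM : ∀ x, ‖U x‖ ≤ M) (y : E) :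
    ∃ x, ‖x - y‖ ≤ M ∧ x + U x = y := by
  let e : E ≃L[ℝ] EuclideanSpace ℝ (Fin (Module.finrank ℝ E)) := toEuclidean
  obtain ⟨z, hz⟩ := exists_add_eq_zero_of_continuous_of_bounded
    (U := fun z => e (U (e.symm z + y))) (by fun_prop)
    fun z => e.toContinuousLinearMap.le_opNorm_of_le (hUM (e.symm z + y))
  have add_eq_zero : e.symm z + U (e.symm z + y) = 0 := by simpa using congrArg e.symm hz
  refine ⟨e.symm z + y, ?_, ?_⟩
  · rw [add_sub_cancel_right, ← norm_neg, neg_eq_of_add_eq_zero_right add_eq_zero]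
    exact hUM _
  · rw [add_right_comm, add_eq_zero, zero_add]

end BoundedPerturbations

/-- A bounded continuous perturbation of the identity on `ℝⁿ` is surjective: if
`‖𝒰(x)‖ ≤ M` for all `x`, then for every `y` there is `x` with `‖x − y‖ ≤ M` and
`x + 𝒰(x) = y`. -/
theorem perturbed_identity_surjective (n : ℕ) (hn : 1 ≤ n) (M : ℝ) (hM : 0 ≤ M)
    (𝒰 : EuclideanSpace ℝ (Fin n) → EuclideanSpace ℝ (Fin n))
    (hcont : Continuous 𝒰) (hbound : ∀ x, ‖𝒰 x‖ ≤ M) :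
    ∀ y : EuclideanSpace ℝ (Fin n), ∃ x, ‖x - y‖ ≤ M ∧ x + 𝒰 x = y :=
  perturbed_identity_surjective_general hcont hbound
end
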